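/- arXiv:2205.01747 — 7 statements merged into one kernel-verified Lean document; each statement's English description precedes it below -/
import Mathlib

section
/- Let n ≥ 1. Identify the negative roots of sl_{n+1}(ℂ) with R⁻ = {−α_{i,j} : 1 ≤ i ≤ j ≤ n}, where α_{i,j} = α_i + ⋯ + α_j. Let ≻ be the partial order on R⁻ generated by the following cover relations: for α, β ∈ R⁻ with −α = Σ_t a_t α_t and s = min{t : a_t ≠ 0}, α covers β if either −β = −α − α_s and a_s = 1, or −β = −α + α_t for some t ≥ s (with β ∈ R⁻). Then for all 1 ≤ i ≤ j ≤ n and 1 ≤ k ≤ ℓ ≤ n one has −α_{i,j} ≽ −α_{k,ℓ} if and only if i ≤ k and j ≤ ℓ. -/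
/-!
Why it holds: identify `−α_{i,j}` with the interval `[i, j]`. A cover either deletes the left
endpoint of the interval or adds one coordinate at or to the right of it; when the result is again
an interval, neither endpoint has moved left (`exists_negRootA_of_coversA`), which gives the forward
direction by induction along a chain. Conversely, lengthening `[i, j]` to `[i, j + 1]` and
shortening it to `[i + 1, j]` are both covers, so from `[i, j]` one reaches `[i, ℓ]` and from
there `[k, ℓ]`; extending on the right before shortening on the left keeps every intermediate
interval nonempty.
-/

/-!
STATEMENT 0. Type `A_n` root combinatorics: the negative roots of `sl_{n+1}(ℂ)` are
`R⁻ = {−α_{i,j} : 1 ≤ i ≤ j ≤ n}`, `α_{i,j} = α_i + ⋯ + α_j`.  Roots are encoded by their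
coefficient vectors `ℕ → ℤ` with respect to the simple roots `α_1, …, α_n`.
-/

/-- Coefficient vector of the negative root `−α_{i,j}` of type `A_n`:
value `-1` at `t` for `i ≤ t ≤ j` and `0` otherwise. -/
def negRootA (i j : ℕ) : ℕ → ℤ := fun t => if i ≤ t ∧ t ≤ j then -1 else 0

/-- `v` belongs to `R⁻`, the set of negative roots of `sl_{n+1}` (type `A_n`). -/
def IsNegRootA (n : ℕ) (v : ℕ → ℤ) : Prop :=
  ∃ i j, 1 ≤ i ∧ i ≤ j ∧ j ≤ n ∧ v = negRootA i j

/-- Coefficient vector of the simple root `α_s`. -/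
def simpleRootA (s : ℕ) : ℕ → ℤ := fun t => if t = s then 1 else 0

/-- The cover relation on `R⁻`: for `α ∈ R⁻` with `−α = Σ_t a_t α_t` and
`s = min {t : a_t ≠ 0}`, `α` covers `β` if either `−β = −α − α_s` and `a_s = 1`,
or `−β = −α + α_t` for some `t ≥ s` (with `β ∈ R⁻`). -/
def CoversA (n : ℕ) (α β : ℕ → ℤ) : Prop :=
  IsNegRootA n α ∧ IsNegRootA n β ∧
  ∃ s, α s ≠ 0 ∧ (∀ t, t < s → α t = 0) ∧
    (((-α) s = 1 ∧ β = α + simpleRootA s) ∨ (∃ t, s ≤ t ∧ β = α - simpleRootA t))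

/-- The partial order `≽` on `R⁻`: the reflexive-transitive closure of the cover
relations (`α ≽ β` iff `β` is reachable from `α` by covers). -/
def GeqA (n : ℕ) : (ℕ → ℤ) → (ℕ → ℤ) → Prop := Relation.ReflTransGen (CoversA n)

theorem negRootA_eq_neg_one {i j t : ℕ} (h₁ : i ≤ t) (h₂ : t ≤ j) : negRootA i j t = -1 :=
  if_pos ⟨h₁, h₂⟩

theorem negRootA_ne_zero {i j t : ℕ} : negRootA i j t ≠ 0 ↔ i ≤ t ∧ t ≤ j := by
  simp [negRootA]

theorem negRootA_eq_zero_of_lt {i j t : ℕ} (h : t < i) : negRootA i j t = 0 :=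
  if_neg (by omega)

/-- A cover moves neither endpoint of the interval to the left. -/
theorem exists_negRootA_of_coversA {n k l : ℕ} {β : ℕ → ℤ} (hkl : k ≤ l)
    (h : CoversA n (negRootA k l) β) :
    ∃ p q, p ≤ q ∧ k ≤ p ∧ l ≤ q ∧ β = negRootA p q := by
  obtain ⟨-, ⟨p, q, -, hpq, -, rfl⟩, s, hs, hmin, h⟩ := h
  -- The minimum `s` of the support of `−α_{k,l}` is its left endpoint.
  have hsk : s = k := by
    have h₁ := (negRootA_ne_zero.1 hs).1
    by_contra hne
    have h₂ := hmin k (by omega)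
    rw [negRootA_eq_neg_one le_rfl hkl] at h₂
    omega
  subst hsk
  have hp : negRootA p q p = -1 := negRootA_eq_neg_one le_rfl hpq
  refine ⟨p, q, hpq, ?_, ?_, rfl⟩
  · -- The coordinates below `s` vanish before the cover and are not touched by it.
    by_contra hlt
    have hz : negRootA s l p = 0 := negRootA_eq_zero_of_lt (by omega)
    rcases h with ⟨-, h⟩ | ⟨t, ht, h⟩
    · rw [h, Pi.add_apply, hz, simpleRootA, if_neg (by omega)] at hp
      omega
    · rw [h, Pi.sub_apply, hz, simpleRootA, if_neg (by omega)] at hp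
      omega
  · -- The coordinate `l` stays nonzero, except when deleting it would leave the zero vector.
    have hl : negRootA s l l = -1 := negRootA_eq_neg_one hkl le_rfl
    refine (negRootA_ne_zero (i := p)).1 ?_ |>.2
    rcases h with ⟨-, h⟩ | ⟨t, ht, h⟩
    · have hsl : l ≠ s := by
        rintro rfl
        rw [h, Pi.add_apply] at hp
        simp only [negRootA, simpleRootA] at hp
        split_ifs at hp <;> omega
      rw [h, Pi.add_apply, hl, simpleRootA, if_neg hsl]
      omega
    · rw [h, Pi.sub_apply, hl, simpleRootA]
      split_ifs <;> omega

theorem coversA_extend_right {n i j : ℕ} (hi : 1 ≤ i) (hij : i ≤ j) (hj : j + 1 ≤ n) :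
    CoversA n (negRootA i j) (negRootA i (j + 1)) := by
  refine ⟨⟨i, j, hi, hij, by omega, rfl⟩, ⟨i, j + 1, hi, by omega, hj, rfl⟩, i,
    negRootA_ne_zero.2 ⟨le_rfl, hij⟩, fun t ht => negRootA_eq_zero_of_lt ht,
    Or.inr ⟨j + 1, by omega, ?_⟩⟩
  funext t
  simp only [negRootA, simpleRootA, Pi.sub_apply]
  split_ifs <;> omega

theorem coversA_shorten_left {n i j : ℕ} (hi : 1 ≤ i) (hij : i + 1 ≤ j) (hj : j ≤ n) :
    CoversA n (negRootA i j) (negRootA (i + 1) j) := by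
  refine ⟨⟨i, j, hi, by omega, hj, rfl⟩, ⟨i + 1, j, by omega, hij, hj, rfl⟩, i,
    negRootA_ne_zero.2 ⟨le_rfl, by omega⟩, fun t ht => negRootA_eq_zero_of_lt ht,
    Or.inl ⟨?_, ?_⟩⟩
  · rw [Pi.neg_apply, negRootA_eq_neg_one le_rfl (by omega), neg_neg]
  · funext t
    simp only [negRootA, simpleRootA, Pi.add_apply]
    split_ifs <;> omega

theorem geqA_extend_right {n i j l : ℕ} (hi : 1 ≤ i) (hij : i ≤ j) (hjl : j ≤ l) (hl : l ≤ n) :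
    GeqA n (negRootA i j) (negRootA i l) := by
  induction l, hjl using Nat.le_induction with
  | base => exact Relation.ReflTransGen.refl
  | succ m hm ih =>
    exact Relation.ReflTransGen.tail (ih (by omega)) (coversA_extend_right hi (by omega) hl)

theorem geqA_shorten_left {n i k l : ℕ} (hi : 1 ≤ i) (hik : i ≤ k) (hkl : k ≤ l) (hl : l ≤ n) :
    GeqA n (negRootA i l) (negRootA k l) := by
  induction k, hik using Nat.le_induction with
  | base => exact Relation.ReflTransGen.refl
  | succ m hm ih =>
    exact Relation.ReflTransGen.tail (ih (by omega)) (coversA_shorten_left (by omega) hkl hl)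

theorem exists_negRootA_of_geqA {n i j : ℕ} {β : ℕ → ℤ} (hij : i ≤ j)
    (h : GeqA n (negRootA i j) β) :
    ∃ p q, p ≤ q ∧ i ≤ p ∧ j ≤ q ∧ β = negRootA p q := by
  unfold GeqA at h
  induction h with
  | refl => exact ⟨i, j, hij, le_rfl, le_rfl, rfl⟩
  | tail _ hc ih =>
    obtain ⟨p, q, hpq, hp, hq, rfl⟩ := ih
    obtain ⟨p', q', hpq', hp', hq', rfl⟩ := exists_negRootA_of_coversA hpq hc
    exact ⟨p', q', hpq', hp.trans hp', hq.trans hq', rfl⟩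

/-- For all `1 ≤ i ≤ j ≤ n` and `1 ≤ k ≤ ℓ ≤ n` one has
`−α_{i,j} ≽ −α_{k,ℓ}` if and only if `i ≤ k` and `j ≤ ℓ`. -/
theorem stmt0 (n : ℕ) (hn : 1 ≤ n) (i j k ℓ : ℕ)
    (hi : 1 ≤ i) (hij : i ≤ j) (hj : j ≤ n)
    (hk : 1 ≤ k) (hkl : k ≤ ℓ) (hl : ℓ ≤ n) :
    GeqA n (negRootA i j) (negRootA k ℓ) ↔ i ≤ k ∧ j ≤ ℓ := by
  constructor
  · intro h
    obtain ⟨p, q, hpq, hp, hq, h⟩ := exists_negRootA_of_geqA hij h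
    -- Comparing supports, `[p, q] ⊆ [k, ℓ]` and `[k, ℓ] ⊆ [p, q]`.
    have hk' : p ≤ k :=
      (negRootA_ne_zero.1 (h ▸ negRootA_ne_zero.2 ⟨le_rfl, hkl⟩ : negRootA p q k ≠ 0)).1
    have hp' := negRootA_ne_zero.1 (h ▸ negRootA_ne_zero.2 ⟨le_rfl, hpq⟩ : negRootA k ℓ p ≠ 0)
    have hq' := negRootA_ne_zero.1 (h ▸ negRootA_ne_zero.2 ⟨hpq, le_rfl⟩ : negRootA k ℓ q ≠ 0)
    omega
  · rintro ⟨hik, hjl⟩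
    exact Relation.ReflTransGen.trans (geqA_extend_right hi hij hjl hl)
      (geqA_shorten_left hi hik hkl hl)
end

section
/- Let n ≥ 1 and let A ⊆ R⁻ be an FFLV-admissible subset of the negative roots of the A_n root system. Let S ⊆ A, set supp S := ⋃_{−α_{i,j} ∈ S} {i, i+1, …, j}, and let {a, a+1, …, b} be a connected component of supp S (a maximal integer interval contained in supp S). Then −α_{a,b} ∈ A. -/
/-!
A root of `S` whose interval meets `[a, b]` lies inside `[a, b]`, since `a - 1` and `b + 1` are not
in the support. Take a root `(a, j) ∈ A` starting at `a` with `j < b`. A root `(k, l)` of `S`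
covering `j + 1` has either `k = a`, and is itself a longer root starting at `a`, or
`a < k ≤ j + 1` and `j < l`, and then the join of `(a, j)` and `(k, l)` puts `(a, l)` in `A`.
Thus roots of `A` starting at `a` can be lengthened until they end at `b`.
-/

/-!
STATEMENT 2.  Type `A_n` combinatorics: negative roots are encoded as pairs `(i,j)`
(standing for `−α_{i,j}`) with `1 ≤ i ≤ j ≤ n`.
-/

/-- `(i,j)` encodes a negative root `−α_{i,j} ∈ R⁻` of type `A_n`. -/
def InRnegA (n : ℕ) (r : ℕ × ℕ) : Prop := 1 ≤ r.1 ∧ r.1 ≤ r.2 ∧ r.2 ≤ n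

/-- The order `≽` on `R⁻`: `−α_{i,j} ≽ −α_{k,ℓ}` iff `i ≤ k` and `j ≤ ℓ`. -/
def GeA (r s : ℕ × ℕ) : Prop := r.1 ≤ s.1 ∧ r.2 ≤ s.2

/-- The set of nonzero components of pairs of the join `β₁ ⊕ β₂`, for
`β₁ = −α_{i₁,i₂}`, `β₂ = −α_{j₁,j₂}` with `i₁ ≤ j₁`:  the join is
`{(−α_{i₁,j₂}, −α_{j₁,i₂})}` if `i₁ < j₁` and `j₁ − 1 ≤ i₂ < j₂`
(`−α_{j₁,i₂}` read as `0` when `i₂ = j₁ − 1`), and `∅` otherwise. -/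
def JoinNZ (b₁ b₂ : ℕ × ℕ) : Set (ℕ × ℕ) :=
  {r | (b₁.1 < b₂.1 ∧ b₂.1 ≤ b₁.2 + 1 ∧ b₁.2 < b₂.2) ∧
       (r = (b₁.1, b₂.2) ∨ (b₂.1 ≤ b₁.2 ∧ r = (b₂.1, b₁.2)))}

/-- `A ⊆ R⁻` is FFLV-admissible:
(i) it is closed under taking sums inside `R⁻` (the sum of `−α_{i,j}` and `−α_{k,ℓ}`
is again a negative root exactly when `j + 1 = k`, in which case it is `−α_{i,ℓ}`,
or symmetrically), and
(ii) for all `α ≽ β` in `A`, every nonzero component of every pair in `α ⊕ β` lies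
in `A`. -/
def AdmissibleA (n : ℕ) (A : Set (ℕ × ℕ)) : Prop :=
  (∀ r ∈ A, InRnegA n r) ∧
  (∀ r ∈ A, ∀ s ∈ A, r.2 + 1 = s.1 → (r.1, s.2) ∈ A) ∧
  (∀ r ∈ A, ∀ s ∈ A, GeA r s → JoinNZ r s ⊆ A)

/-- Let `A ⊆ R⁻` be FFLV-admissible and `S ⊆ A`.  If `{a, a+1, …, b}` is a connected
component of `supp S = ⋃_{−α_{i,j} ∈ S} {i, …, j}` (i.e. a maximal integer interval
contained in `supp S`), then `−α_{a,b} ∈ A`. -/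
theorem stmt2 (n : ℕ) (hn : 1 ≤ n) (A : Set (ℕ × ℕ)) (hA : AdmissibleA n A)
    (S : Set (ℕ × ℕ)) (hS : S ⊆ A) (a b : ℕ) (hab : a ≤ b)
    (hIcc : ∀ t, a ≤ t → t ≤ b → ∃ r ∈ S, r.1 ≤ t ∧ t ≤ r.2)
    (hleft : ¬ ∃ r ∈ S, r.1 ≤ a - 1 ∧ a - 1 ≤ r.2)
    (hright : ¬ ∃ r ∈ S, r.1 ≤ b + 1 ∧ b + 1 ≤ r.2) :
    (a, b) ∈ A := by
  obtain ⟨-, -, hJ⟩ := hA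
  -- Maximality traps every root of `S` that meets `[a, b]` inside `[a, b]`.
  have hcover : ∀ t, a ≤ t → t ≤ b → ∃ i j, (i, j) ∈ A ∧ a ≤ i ∧ i ≤ t ∧ t ≤ j ∧ j ≤ b := by
    intro t hat htb
    obtain ⟨⟨i, j⟩, hr, hit, htj⟩ := hIcc t hat htb
    refine ⟨i, j, hS hr, ?_, hit, htj, ?_⟩
    · by_contra h
      exact hleft ⟨_, hr, by dsimp only; omega, by dsimp only at *; omega⟩
    · by_contra h
      exact hright ⟨_, hr, by dsimp only at *; omega, by dsimp only; omega⟩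
  have key : ∀ t, a ≤ t → t ≤ b → ∃ j, (a, j) ∈ A ∧ t ≤ j ∧ j ≤ b := by
    intro t hat
    induction t, hat using Nat.le_induction with
    | base =>
      intro hb
      obtain ⟨i, j, hr, hai, hia, haj, hjb⟩ := hcover a le_rfl hb
      obtain rfl : i = a := le_antisymm hia hai
      exact ⟨j, hr, haj, hjb⟩
    | succ t hat ih =>
      intro htb
      obtain ⟨j, hj, htj, hjb⟩ := ih (by omega)
      by_cases hlt : t + 1 ≤ j
      · exact ⟨j, hj, hlt, hjb⟩
      obtain ⟨k, l, hr, hak, hkt, htl, hlb⟩ := hcover (t + 1) (by omega) htb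
      refine ⟨l, ?_, htl, hlb⟩
      rcases hak.eq_or_lt with rfl | hak
      · exact hr
      · -- Here `j = t`, so `(a, j) ≽ (k, l)` and the long component of their join is `(a, l)`.
        exact hJ _ hj _ hr ⟨hak.le, by dsimp only; omega⟩
          ⟨⟨hak, by dsimp only; omega, by dsimp only; omega⟩, Or.inl rfl⟩
  obtain ⟨j, hj, hbj, hjb⟩ := key b hab le_rfl
  obtain rfl : j = b := le_antisymm hjb hbj
  exact hj
end

section
/- Let n ≥ 1 and let p = (−α_{i₁,j₁}, …, −α_{i_s,j_s}) be a type A Dyck path in R⁻(A_n) such that consecutive roots are linked, i.e., i_{t+1} ≤ j_t + 1 for all 1 ≤ t < s. Then the join closure of the set of roots of p equals the grid {−α_{i_k, j_ℓ} : 1 ≤ k, ℓ ≤ s and i_k ≤ j_ℓ}. -/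
/-- `C` is closed under the join operation: for any two of its elements, every nonzero
component of every pair of their join lies in `C`. -/
def JoinClosedA (C : Set (ℕ × ℕ)) : Prop :=
  ∀ r ∈ C, ∀ s ∈ C, r.1 ≤ s.1 → JoinNZ r s ⊆ C

/-- The join closure of `S`: the smallest subset of `R⁻` containing `S` and closed
under the join operation. -/
def joinClosureA (n : ℕ) (S : Set (ℕ × ℕ)) : Set (ℕ × ℕ) :=
  ⋂₀ {C | S ⊆ C ∧ (∀ r ∈ C, InRnegA n r) ∧ JoinClosedA C}

/-- A type `A` Dyck path of length `len`: a sequence of negative roots starting and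
ending at (negatives of) simple roots which is strictly decreasing for `≻`. -/
def IsDyckA (n len : ℕ) (p : ℕ → ℕ × ℕ) : Prop :=
  1 ≤ len ∧ (∀ t, t < len → InRnegA n (p t)) ∧
  (p 0).1 = (p 0).2 ∧ (p (len - 1)).1 = (p (len - 1)).2 ∧
  (∀ t, t + 1 < len → GeA (p t) (p (t + 1)) ∧ p t ≠ p (t + 1))

theorem dyck_mono {n len : ℕ} {p : ℕ → ℕ × ℕ} (hd : IsDyckA n len p) {k l : ℕ}
    (hkl : k ≤ l) (hl : l < len) : GeA (p k) (p l) := by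
  induction l, hkl using Nat.le_induction with
  | base => exact ⟨le_rfl, le_rfl⟩
  | succ l _ ih =>
    have h₁ := ih (by omega)
    have h₂ := (hd.2.2.2.2 l hl).1
    exact ⟨h₁.1.trans h₂.1, h₁.2.trans h₂.2⟩

theorem upper_mem {n len : ℕ} {p : ℕ → ℕ × ℕ} (hd : IsDyckA n len p)
    (hlink : ∀ t, t + 1 < len → (p (t + 1)).1 ≤ (p t).2 + 1)
    {C : Set (ℕ × ℕ)} (hp : ∀ t < len, p t ∈ C) (hC : JoinClosedA C) {k l : ℕ}
    (hkl : k ≤ l) (hl : l < len) : ((p k).1, (p l).2) ∈ C := by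
  induction l, hkl using Nat.le_induction with
  | base => exact hp k hl
  | succ l hkl ih =>
    have h₁ := ih (by omega)
    have h₂ := (hd.2.2.2.2 l hl).1.2
    have h₃ := (dyck_mono hd (hkl.trans l.le_succ) hl).1
    rcases h₂.eq_or_lt with h₂ | h₂
    · rwa [← h₂]
    rcases h₃.eq_or_lt with h₃ | h₃
    · rw [h₃]
      exact hp _ hl
    · exact hC _ h₁ _ (hp _ hl) h₃.le ⟨⟨h₃, hlink l hl, h₂⟩, Or.inl rfl⟩

theorem lower_mem {n len : ℕ} {p : ℕ → ℕ × ℕ} (hd : IsDyckA n len p)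
    {C : Set (ℕ × ℕ)} (hp : ∀ t < len, p t ∈ C) (hC : JoinClosedA C) {k l : ℕ}
    (hlk : l ≤ k) (hk : k < len) (h : (p k).1 ≤ (p l).2) : ((p k).1, (p l).2) ∈ C := by
  obtain ⟨h₁, h₂⟩ := dyck_mono hd hlk hk
  rcases h₁.eq_or_lt with h₁ | h₁
  · rw [← h₁]
    exact hp l (by omega)
  rcases h₂.eq_or_lt with h₂ | h₂
  · rw [h₂]
    exact hp k hk
  · exact hC _ (hp l (by omega)) _ (hp k hk) h₁.le ⟨⟨h₁, by omega, h₂⟩, Or.inr ⟨h, rfl⟩⟩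

/-- Let `p = (−α_{i₁,j₁}, …, −α_{i_s,j_s})` be a type `A` Dyck path such that
consecutive roots are linked (`i_{t+1} ≤ j_t + 1`).  Then the join closure of the set
of roots of `p` equals the grid `{−α_{i_k, j_ℓ} : i_k ≤ j_ℓ}`. -/
theorem stmt3 (n len : ℕ) (hn : 1 ≤ n) (p : ℕ → ℕ × ℕ)
    (hd : IsDyckA n len p)
    (hlink : ∀ t, t + 1 < len → (p (t + 1)).1 ≤ (p t).2 + 1) :
    joinClosureA n {r | ∃ t < len, r = p t} =
      {r | ∃ k < len, ∃ l < len, (p k).1 ≤ (p l).2 ∧ r = ((p k).1, (p l).2)} := by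
  apply Set.Subset.antisymm
  · apply Set.sInter_subset_of_mem
    refine ⟨?_, ?_, ?_⟩
    · rintro r ⟨t, ht, rfl⟩
      exact ⟨t, ht, t, ht, (hd.2.1 t ht).2.1, rfl⟩
    · rintro r ⟨k, hk, l, hl, hkl, rfl⟩
      exact ⟨(hd.2.1 k hk).1, hkl, (hd.2.1 l hl).2.2⟩
    · rintro _ ⟨k, hk, l, hl, hkl, rfl⟩ _ ⟨k', hk', l', hl', hkl', rfl⟩ _ r ⟨⟨h₁, _, _⟩, h⟩
      rcases h with rfl | ⟨h, rfl⟩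
      · exact ⟨k, hk, l', hl', h₁.le.trans hkl', rfl⟩
      · exact ⟨k', hk', l, hl, h, rfl⟩
  · rintro r ⟨k, hk, l, hl, hkl, rfl⟩ C ⟨hS, _, hC⟩
    have hp : ∀ t < len, p t ∈ C := fun t ht => hS ⟨t, ht, rfl⟩
    rcases le_total k l with h | h
    · exact upper_mem hd hlink hp hC h hl
    · exact lower_mem hd hp hC h hk hkl
end

section
/- Let n ≥ 1 and let w ∈ S_{n+1} be a permutation. Then the inversion set A_w := {−α_{i,j} : 1 ≤ i ≤ j ≤ n, w(i) > w(j+1)} ⊆ R⁻(A_n) (which equals w⁻¹(R⁺) ∩ R⁻) is FFLV-admissible if and only if w avoids both patterns 4231 and 2413. -/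
/-!
Write `a = i₁ < b = j₁ ≤ c = i₂ + 1 < d = j₂ + 1` for the positions involved in the join of
`−α_{i₁,i₂}` and `−α_{j₁,j₂}`.  Both roots lie in `A_w` iff `w a > w c` and `w b > w d`, and the
components of the join lie in `A_w` iff `w a > w d` and, when `b < c`, `w b > w c`.
If `b = c` then `w a > w b > w d`, so nothing can fail; this case also covers closure under addition.
If `b < c`, failure of `w a > w d` means `w c < w a < w d < w b`, an occurrence of `2413`, and
failure of `w b > w c` means `w d < w b < w c < w a`, an occurrence of `4231`.  Conversely each
occurrence of one of these patterns is a pair of roots in `A_w` whose join leaves `A_w`.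
The chains of inequalities are extracted from `ContainsPat` in `containsPat_4231_iff` and
`containsPat_2413_iff`.
-/

/-!
STATEMENT 7.  The inversion set `A_w` of `w ∈ S_{n+1}` is FFLV-admissible iff `w` avoids
the patterns `4231` and `2413`.  Permutations of `{1, …, m}` are encoded as permutations
of `ℕ` fixing everything outside `{1, …, m}`; negative roots of `A_n` as pairs `(i,j)`
(standing for `−α_{i,j}`).
-/

/-- `w` is a permutation of `{1, …, m}` (an element of `S_m`). -/
def PermOn (m : ℕ) (w : Equiv.Perm ℕ) : Prop := ∀ i, ¬(1 ≤ i ∧ i ≤ m) → w i = i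

/-- `w ∈ S_m` contains the pattern `pat = pat₁pat₂pat₃pat₄` (four pairwise distinct values
in `{1,2,3,4}`): there are `j₁ < j₂ < j₃ < j₄` in `{1, …, m}` with
`w(j_a) < w(j_b) ↔ pat_a < pat_b` for all `a, b`. -/
def ContainsPat (m : ℕ) (w : Equiv.Perm ℕ) (pat : Fin 4 → ℕ) : Prop :=
  ∃ j : Fin 4 → ℕ, (∀ a, 1 ≤ j a ∧ j a ≤ m) ∧ (∀ a b : Fin 4, a < b → j a < j b) ∧
    ∀ a b : Fin 4, w (j a) < w (j b) ↔ pat a < pat b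

/-- The pattern `4231`. -/
def pat4231 : Fin 4 → ℕ := ![4, 2, 3, 1]

/-- The pattern `2413`. -/
def pat2413 : Fin 4 → ℕ := ![2, 4, 1, 3]

/-- The inversion set `A_w = {−α_{i,j} : 1 ≤ i ≤ j ≤ n, w(i) > w(j+1)} = w⁻¹(R⁺) ∩ R⁻`. -/
def invSetA (n : ℕ) (w : Equiv.Perm ℕ) : Set (ℕ × ℕ) :=
  {r | (1 ≤ r.1 ∧ r.1 ≤ r.2 ∧ r.2 ≤ n) ∧ w (r.2 + 1) < w r.1}

theorem containsPat_4231_iff (m : ℕ) (w : Equiv.Perm ℕ) :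
    ContainsPat m w pat4231 ↔ ∃ a b c d : ℕ, 1 ≤ a ∧ a < b ∧ b < c ∧ c < d ∧ d ≤ m ∧
      w d < w b ∧ w b < w c ∧ w c < w a := by
  constructor
  · rintro ⟨j, hb, hj, hp⟩
    simp only [Fin.forall_fin_succ, pat4231] at hb hj hp
    simp at hb hj hp
    exact ⟨j 0, j 1, j 2, j 3, by omega, by omega, by omega, by omega, by omega,
      by omega, by omega, by omega⟩
  · rintro ⟨a, b, c, d, h1, hab, hbc, hcd, hd, h2, h3, h4⟩
    refine ⟨![a, b, c, d], ?_, ?_, ?_⟩ <;>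
      simp [Fin.forall_fin_succ, pat4231] <;> omega

theorem containsPat_2413_iff (m : ℕ) (w : Equiv.Perm ℕ) :
    ContainsPat m w pat2413 ↔ ∃ a b c d : ℕ, 1 ≤ a ∧ a < b ∧ b < c ∧ c < d ∧ d ≤ m ∧
      w c < w a ∧ w a < w d ∧ w d < w b := by
  constructor
  · rintro ⟨j, hb, hj, hp⟩
    simp only [Fin.forall_fin_succ, pat2413] at hb hj hp
    simp at hb hj hp
    exact ⟨j 0, j 1, j 2, j 3, by omega, by omega, by omega, by omega, by omega,
      by omega, by omega, by omega⟩
  · rintro ⟨a, b, c, d, h1, hab, hbc, hcd, hd, h2, h3, h4⟩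
    refine ⟨![a, b, c, d], ?_, ?_, ?_⟩ <;>
      simp [Fin.forall_fin_succ, pat2413] <;> omega

/-- For `w ∈ S_{n+1}`, the inversion set `A_w` is FFLV-admissible iff `w` avoids both
patterns `4231` and `2413`. -/
theorem stmt7 (n : ℕ) (hn : 1 ≤ n) (w : Equiv.Perm ℕ) (hw : PermOn (n + 1) w) :
    AdmissibleA n (invSetA n w) ↔
      ¬ ContainsPat (n + 1) w pat4231 ∧ ¬ ContainsPat (n + 1) w pat2413 := by
  rw [containsPat_4231_iff, containsPat_2413_iff]
  constructor
  · rintro ⟨-, -, hjoin⟩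
    -- An occurrence at positions `a < b < c + 1 < d + 1` gives the roots `(a, c)` and `(b, d)`.
    constructor
    · rintro ⟨a, b, c, d, ha, hab, hbc, hcd, hd, h1, h2, h3⟩
      obtain ⟨c, rfl⟩ : ∃ c', c = c' + 1 := ⟨c - 1, by omega⟩
      obtain ⟨d, rfl⟩ : ∃ d', d = d' + 1 := ⟨d - 1, by omega⟩
      have hmem : (b, c) ∈ invSetA n w :=
        hjoin (a, c) ⟨⟨ha, by grind, by grind⟩, h3⟩ (b, d) ⟨⟨by grind, by grind, by grind⟩, h1⟩
          ⟨hab.le, by grind⟩ ⟨⟨hab, by grind, by grind⟩, Or.inr ⟨by grind, rfl⟩⟩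
      exact absurd hmem.2 h2.not_gt
    · rintro ⟨a, b, c, d, ha, hab, hbc, hcd, hd, h1, h2, h3⟩
      obtain ⟨c, rfl⟩ : ∃ c', c = c' + 1 := ⟨c - 1, by omega⟩
      obtain ⟨d, rfl⟩ : ∃ d', d = d' + 1 := ⟨d - 1, by omega⟩
      have hmem : (a, d) ∈ invSetA n w :=
        hjoin (a, c) ⟨⟨ha, by grind, by grind⟩, h1⟩ (b, d) ⟨⟨by grind, by grind, by grind⟩, h3⟩
          ⟨hab.le, by grind⟩ ⟨⟨hab, by grind, by grind⟩, Or.inl rfl⟩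
      exact absurd hmem.2 h2.not_gt
  · rintro ⟨h4231, h2413⟩
    refine ⟨fun r hr => hr.1, ?_, ?_⟩
    · rintro ⟨i, k⟩ ⟨⟨hi, hik, hk⟩, h1⟩ ⟨j, l⟩ ⟨⟨hj, hjl, hl⟩, h2⟩ hkj
      dsimp only at *
      subst hkj
      exact ⟨⟨hi, by grind, hl⟩, h2.trans h1⟩
    · rintro ⟨i, k⟩ ⟨⟨hi, hik, hk⟩, h1⟩ ⟨j, l⟩ ⟨⟨hj, hjl, hl⟩, h2⟩ -
        r ⟨⟨hij, hjk, hkl⟩, rfl | ⟨hjk', rfl⟩⟩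
      all_goals dsimp only at *
      · refine ⟨⟨hi, by grind, hl⟩, ?_⟩
        dsimp only
        rcases hjk.eq_or_lt with rfl | hlt
        · exact h2.trans h1
        · by_contra hcon
          have hne : w i ≠ w (l + 1) := w.injective.ne (by omega)
          exact h2413 ⟨i, j, k + 1, l + 1, hi, hij, hlt, by omega, by omega, h1, by omega, h2⟩
      · refine ⟨⟨hj, hjk', hk⟩, ?_⟩
        dsimp only
        by_contra hcon
        have hne : w j ≠ w (k + 1) := w.injective.ne (by omega)
        exact h4231 ⟨i, j, k + 1, l + 1, hi, hij, by omega, by omega, by omega, h2, by omega, h1⟩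
end

section
/- Let n ≥ 1, let 𝐢 = i₁i₂i₃i₄ be any pattern (a sequence of four pairwise distinct values in {1,2,3,4}), and let τ ∈ S_{2n}. If τ avoids 𝐢, then the reduction τ̲ ∈ S_{n+1} of τ also avoids 𝐢. In particular, the reduction map sends 𝐢-avoiding elements of S_{2n} to 𝐢-avoiding elements of S_{n+1}. -/
/-- The one-line notation `(w(1), …, w(m))` of `w ∈ S_m`. -/
def wordOf (m : ℕ) (w : Equiv.Perm ℕ) : List ℕ := (List.range m).map (fun t => w (t + 1))

/-- Delete every occurrence of `x` in a list except the leftmost one. -/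
def keepFirst (x : ℕ) : List ℕ → List ℕ
  | [] => []
  | a :: t => if a = x then a :: t.filter (fun b => b ≠ x) else a :: keepFirst x t

/-- `w ∈ S_{n+1}` is the reduction `u̲` of `u ∈ S_{2n}`:  its one-line notation is
obtained from `(u(1), …, u(2n))` by replacing every value greater than `n+1` by `n+1`
and deleting every occurrence of `n+1` except the leftmost one. -/
def IsReduction (n : ℕ) (u w : Equiv.Perm ℕ) : Prop :=
  wordOf (n + 1) w = keepFirst (n + 1) ((wordOf (2 * n) u).map (fun v => min v (n + 1)))

lemma keepFirst_sublist (x : ℕ) (l : List ℕ) : (keepFirst x l).Sublist l := by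
  induction l with
  | nil => simp [keepFirst]
  | cons a t ih =>
    unfold keepFirst
    split_ifs
    · exact List.filter_sublist.cons_cons a
    · exact ih.cons_cons a

/-- The reduced word sits inside the truncated one. Here `f` is indexed from `0`, so position
`t + 1` of `w` corresponds to position `f t + 1` of `u`. -/
lemma exists_positions {n : ℕ} {u w : Equiv.Perm ℕ} (hred : IsReduction n u w) :
    ∃ f : ℕ ↪o ℕ, ∀ t < n + 1, f t < 2 * n ∧ w (t + 1) = min (u (f t + 1)) (n + 1) := by
  have hsub := keepFirst_sublist (n + 1) ((wordOf (2 * n) u).map (fun v => min v (n + 1)))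
  rw [← hred] at hsub
  obtain ⟨f, hf⟩ := List.sublist_iff_exists_orderEmbedding_getElem?_eq.mp hsub
  refine ⟨f, fun t ht => ?_⟩
  have h := hf t
  by_cases hft : f t < 2 * n
  · exact ⟨hft, by simpa [wordOf, List.getElem?_range, ht, hft] using h⟩
  · simp [wordOf, List.getElem?_range, ht, hft] at h

/-- If `u ∈ S_{2n}` avoids the pattern `𝐢`, then its reduction `u̲ ∈ S_{n+1}` also
avoids `𝐢`. -/
theorem stmt9 (n : ℕ) (hn : 1 ≤ n) (pat : Fin 4 → ℕ)
    (hinj : Function.Injective pat) (hval : ∀ a, 1 ≤ pat a ∧ pat a ≤ 4)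
    (u w : Equiv.Perm ℕ) (hu : PermOn (2 * n) u) (hw : PermOn (n + 1) w)
    (hred : IsReduction n u w)
    (havoid : ¬ ContainsPat (2 * n) u pat) :
    ¬ ContainsPat (n + 1) w pat := by
  rintro ⟨j, hj, hmono, hpat⟩
  obtain ⟨f, hf⟩ := exists_positions hred
  have key : ∀ a, f (j a - 1) < 2 * n ∧ w (j a) = min (u (f (j a - 1) + 1)) (n + 1) := by
    intro a
    have hja := hj a
    have h := hf (j a - 1) (by omega)
    rwa [Nat.sub_add_cancel hja.1] at h
  refine havoid ⟨fun a => f (j a - 1) + 1, fun a => ?_, fun a b hab => ?_, fun a b => ?_⟩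
  · have := (key a).1
    dsimp only
    omega
  · have hja := hj a
    have hlt := hmono a b hab
    have : f (j a - 1) < f (j b - 1) := f.lt_iff_lt.mpr (by omega)
    dsimp only
    omega
  · rw [← hpat a b]
    have ha := (key a).2
    have hb := (key b).2
    by_cases hab : j a = j b
    · simp [hab]
    · have hne : w (j a) ≠ w (j b) := fun h => hab (w.injective h)
      dsimp only
      omega
end

section
/- Let n ≥ 2 and 1 < k ≤ i ≤ j < ℓ ≤ n. In the i-th fundamental representation Λ^i(ℂ^{n+1}) of sl_{n+1}(ℂ), with negative root vectors f_{a,b} acting as the matrix unit E_{b+1,a} and highest weight vector v_{ω_i} = e₁ ∧ ⋯ ∧ e_i, there exists a nonzero constant c ∈ ℂ such that (f_{1,j} ∘ f_{k,ℓ} + c · f_{1,ℓ} ∘ f_{k,j})(v_{ω_i}) = 0. -/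
/-!
Both composites send the basis vector `e₁ ∧ ⋯ ∧ e_i` to a signed basis vector supported on the
same set `({1, …, i} ∖ {1, k}) ∪ {j + 1, ℓ + 1}`: each removes the letters `1` and `k` and inserts
`j + 1` and `ℓ + 1`, which are distinct and exceed `i`, so no term vanishes. The two images are
therefore nonzero multiples of one vector, and `c` is minus the ratio of the two signs; its actual
value is not needed. The single-step computation is `matE_single`.
-/

/-!
STATEMENT 14.  A quadratic relation in the fundamental `sl_{n+1}`-module `Λ^i(ℂ^{n+1})`.

The exterior power `Λ^k(ℂ^{n+1})` is modelled concretely via its standard basis: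
vectors are functions `Finset ℕ → ℂ`, where the indicator function of a `k`-element
subset `S ⊆ {1, …, n+1}` represents the wedge `e_{s_1} ∧ ⋯ ∧ e_{s_k}` (with
`s_1 < ⋯ < s_k` the elements of `S`).  The matrix unit `E_{p,q} ∈ gl_{n+1}(ℂ)`
(sending `e_q ↦ e_p`) acts by
`E_{p,q} · (v₁ ∧ ⋯ ∧ v_k) = Σ_t v₁ ∧ ⋯ ∧ E_{p,q} v_t ∧ ⋯ ∧ v_k`;  on basis vectors
this replaces the letter `e_q` by `e_p` (yielding `0` if `q ∉ S` or `p ∈ S ∖ {q}`),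
with the Koszul sign `(−1)^{#{s ∈ S ∖ {q} : min(p,q) < s < max(p,q)}}` coming from
reordering the result increasingly.
-/

/-- Action of the matrix unit `E_{p,q}` on the exterior power, in the coordinates
described above. -/
noncomputable def matE (p q : ℕ) (x : Finset ℕ → ℂ) : Finset ℕ → ℂ := fun T =>
  if p = q then (if q ∈ T then x T else 0)
  else if p ∈ T ∧ q ∉ T then
    (-1 : ℂ) ^ (((T.erase p).filter (fun s => min p q < s ∧ s < max p q)).card) *
      x (insert q (T.erase p))
  else 0

/-- The negative root vector `f_{a,b}` of weight `−α_{a,b}`: the action of the matrix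
unit `E_{b+1,a}`. -/
noncomputable def fRoot (a b : ℕ) : (Finset ℕ → ℂ) → (Finset ℕ → ℂ) := matE (b + 1) a

/-- The highest weight vector `v_{ω_k} = e₁ ∧ ⋯ ∧ e_k` of `Λ^k(ℂ^{n+1})`. -/
noncomputable def hwVec (k : ℕ) : Finset ℕ → ℂ := fun T => if T = Finset.Icc 1 k then 1 else 0

/-- On a basis vector whose index set contains `q` but not `p`, the matrix unit `E_{p,q}` replaces
the letter `q` by `p`, up to a sign. -/
theorem matE_single (p q : ℕ) (S : Finset ℕ) (z : ℂ) (hq : q ∈ S) (hp : p ∉ S) :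
    ∃ m : ℕ, matE p q (Pi.single S z) =
      Pi.single (insert p (S.erase q)) ((-1 : ℂ) ^ m * z) := by
  have hpq : p ≠ q := fun h => hp (h ▸ hq)
  refine ⟨(((insert p (S.erase q)).erase p).filter
    (fun s => min p q < s ∧ s < max p q)).card, ?_⟩
  funext T
  by_cases hT : T = insert p (S.erase q)
  · subst hT
    have h : insert q ((insert p (S.erase q)).erase p) = S := by
      ext a
      simp only [Finset.mem_insert, Finset.mem_erase]
      grind
    simp only [matE, h]
    simp [hpq, hpq.symm]
  · rw [Pi.single_eq_of_ne hT]
    simp only [matE, if_neg hpq]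
    split_ifs with hc
    · have h : insert q (T.erase p) ≠ S := by
        rintro rfl
        apply hT
        ext a
        simp only [Finset.mem_insert, Finset.mem_erase]
        grind
      rw [Pi.single_eq_of_ne h, mul_zero]
    · rfl

theorem hwVec_eq_single (i : ℕ) : hwVec i = Pi.single (Finset.Icc 1 i) 1 := by
  funext T
  simp [hwVec, Pi.single_apply]

/-- Let `n ≥ 2` and `1 < k ≤ i ≤ j < ℓ ≤ n`.  In `Λ^i(ℂ^{n+1})`, there is a nonzero
constant `c ∈ ℂ` with `(f_{1,j} ∘ f_{k,ℓ} + c · f_{1,ℓ} ∘ f_{k,j}) (v_{ω_i}) = 0`. -/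
theorem stmt14 (n k i j ℓ : ℕ) (hn : 2 ≤ n) (hk : 1 < k) (hki : k ≤ i) (hij : i ≤ j)
    (hjl : j < ℓ) (hl : ℓ ≤ n) :
    ∃ c : ℂ, c ≠ 0 ∧
      fRoot 1 j (fRoot k ℓ (hwVec i)) + c • fRoot 1 ℓ (fRoot k j (hwVec i)) = 0 := by
  obtain ⟨a, ha⟩ := matE_single (ℓ + 1) k (Finset.Icc 1 i) 1
    (by simp; omega) (by simp; omega)
  obtain ⟨b, hb⟩ := matE_single (j + 1) k (Finset.Icc 1 i) 1
    (by simp; omega) (by simp; omega)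
  obtain ⟨a', ha'⟩ := matE_single (j + 1) 1 (insert (ℓ + 1) ((Finset.Icc 1 i).erase k))
    ((-1 : ℂ) ^ a * 1) (by simp; omega) (by simp; omega)
  obtain ⟨b', hb'⟩ := matE_single (ℓ + 1) 1 (insert (j + 1) ((Finset.Icc 1 i).erase k))
    ((-1 : ℂ) ^ b * 1) (by simp; omega) (by simp; omega)
  have hset : insert (j + 1) ((insert (ℓ + 1) ((Finset.Icc 1 i).erase k)).erase 1) =
      insert (ℓ + 1) ((insert (j + 1) ((Finset.Icc 1 i).erase k)).erase 1) := by
    ext x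
    simp only [Finset.mem_insert, Finset.mem_erase, Finset.mem_Icc]
    omega
  have hu : (-1 : ℂ) ^ a' * ((-1) ^ a * 1) ≠ 0 := by simp
  have hv : (-1 : ℂ) ^ b' * ((-1) ^ b * 1) ≠ 0 := by simp
  refine ⟨-(((-1 : ℂ) ^ a' * ((-1) ^ a * 1)) / ((-1 : ℂ) ^ b' * ((-1) ^ b * 1))),
    neg_ne_zero.mpr (div_ne_zero hu hv), ?_⟩
  simp only [fRoot, hwVec_eq_single]
  rw [ha, hb, ha', hb', hset, ← Pi.single_smul, smul_eq_mul, neg_mul, div_mul_cancel₀ _ hv,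
    ← Pi.single_add, add_neg_cancel, Pi.single_zero]
end

section
/- Let n ≥ 1 and let A ⊆ R⁻(A_n) be FFLV-admissible. Then for all λ, μ ∈ ℤ_{≥0}^n: P_A(λ) + P_A(μ) = P_A(λ + μ) and S_A(λ) + S_A(μ) = S_A(λ + μ), where + on the left-hand sides denotes Minkowski sum. -/
/-- The FFLV polytope `P(λ) ⊆ ℝ_{≥0}^{R⁻}` of type `A_n` for
`λ = Σ m_i ω_i` with `m ∈ ℤ_{≥0}^n`:  for every Dyck path `p`,
`Σ_{β ∈ p} x_β ≤ m_{s(p)} + ⋯ + m_{e(p)}`. -/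
def PolyA (n : ℕ) (m : ℕ → ℕ) : Set ((ℕ × ℕ) → ℝ) :=
  {x | (∀ r, ¬ InRnegA n r → x r = 0) ∧ (∀ r, 0 ≤ x r) ∧
    ∀ len (p : ℕ → ℕ × ℕ), IsDyckA n len p →
      ∑ t ∈ Finset.range len, x (p t) ≤
        ∑ c ∈ Finset.Icc (p 0).1 (p (len - 1)).1, (m c : ℝ)}

/-- The face `P_A(λ)` of `P(λ)` cut out by `x_β = 0` for `β ∉ A`. -/
def PolyFaceA (n : ℕ) (m : ℕ → ℕ) (A : Set (ℕ × ℕ)) : Set ((ℕ × ℕ) → ℝ) :=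
  {x ∈ PolyA n m | ∀ r, r ∉ A → x r = 0}

/-- The lattice points `S_A(λ) = P_A(λ) ∩ ℤ^{R⁻}`. -/
def LatticeFaceA (n : ℕ) (m : ℕ → ℕ) (A : Set (ℕ × ℕ)) : Set ((ℕ × ℕ) → ℝ) :=
  {x ∈ PolyFaceA n m A | ∀ r, ∃ z : ℤ, x r = z}

/-! ### Marks -/

/-- The partial sum `m_1 + ⋯ + m_c`, the value of the `c`-th mark. -/
def mark (m : ℕ → ℕ) (c : ℕ) : ℝ := ∑ k ∈ Finset.range c, (m (k + 1) : ℝ)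

lemma mark_zero (m : ℕ → ℕ) : mark m 0 = 0 := by simp [mark]

lemma mark_succ (m : ℕ → ℕ) (c : ℕ) : mark m (c + 1) = mark m c + m (c + 1) := by
  simp [mark, Finset.sum_range_succ]

lemma mark_nonneg (m : ℕ → ℕ) (c : ℕ) : 0 ≤ mark m c :=
  Finset.sum_nonneg fun _ _ => Nat.cast_nonneg _

lemma mark_add (l m : ℕ → ℕ) (c : ℕ) : mark (l + m) c = mark l c + mark m c := by
  simp [mark, Finset.sum_add_distrib]

lemma mark_mono (m : ℕ → ℕ) : Monotone (mark m) :=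
  monotone_nat_of_le_succ fun c => by
    rw [mark_succ]
    linarith [Nat.cast_nonneg (α := ℝ) (m (c + 1))]

lemma mark_int (m : ℕ → ℕ) (c : ℕ) : ∃ k : ℤ, mark m c = k :=
  ⟨∑ k ∈ Finset.range c, (m (k + 1) : ℤ), by simp [mark]⟩

/-- The bound in a Dyck path inequality is a difference of two marks. -/
lemma sum_Icc_eq_mark (m : ℕ → ℕ) {s e : ℕ} (hs : 1 ≤ s) (h : s ≤ e) :
    ∑ c ∈ Finset.Icc s e, (m c : ℝ) = mark m e - mark m (s - 1) := by
  induction e, h using Nat.le_induction with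
  | base =>
    obtain ⟨k, rfl⟩ : ∃ k, s = k + 1 := ⟨s - 1, by omega⟩
    simp [mark_succ]
  | succ e he ih =>
    rw [Finset.sum_Icc_succ_top (by omega), ih, mark_succ]
    ring

/-! ### The splitting function -/

/-- A nondecreasing function with nondecreasing complement `t - f t` that sends the marks of
`l + m` to those of `l` and preserves integers. The clause on `t ≥ T_n` drives the induction:
passing to `n + 1` adds the ramp `t ↦ min (max (t - T_n) 0) l_{n+1}`, which lives on `t ≥ T_n`. -/
lemma exists_split (l m : ℕ → ℕ) (n : ℕ) :
    ∃ f : ℝ → ℝ, Monotone f ∧ Monotone (fun t => t - f t) ∧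
      (∀ c ≤ n, f (mark (l + m) c) = mark l c) ∧
      (∀ t : ℝ, (∃ k : ℤ, t = k) → ∃ k : ℤ, f t = k) ∧
      (∀ t, mark (l + m) n ≤ t → f t = mark l n) := by
  induction n with
  | zero =>
    refine ⟨fun _ => 0, monotone_const, ?_, ?_, ?_, ?_⟩
    · intro s t h; simpa using h
    · intro c hc
      obtain rfl : c = 0 := by omega
      simp [mark_zero]
    · intro t _; exact ⟨0, by simp⟩
    · intro t _; simp [mark_zero]
  | succ n ih =>
    obtain ⟨f, hf, hg, hc, hz, ht⟩ := ih
    set T := mark (l + m) n with hT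
    have hl : (0 : ℝ) ≤ l (n + 1) := Nat.cast_nonneg _
    have hm : (0 : ℝ) ≤ m (n + 1) := Nat.cast_nonneg _
    have low : ∀ t, t ≤ T → min (max (t - T) 0) (l (n + 1) : ℝ) = 0 := fun t h => by
      rw [max_eq_right (by linarith), min_eq_left hl]
    have high : ∀ t, T ≤ t → max (t - T) 0 = t - T := fun t h => max_eq_left (by linarith)
    refine ⟨fun t => f t + min (max (t - T) 0) (l (n + 1)), ?_, ?_, ?_, ?_, ?_⟩
    · intro s t h
      have := hf h
      dsimp only
      gcongr
    · intro s t h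
      have h1 := hg h
      dsimp only at h1 ⊢
      rcases le_total t T with h2 | h2
      · rw [low t h2, low s (h.trans h2)]
        linarith
      · rcases le_total s T with h3 | h3
        · have h4 := hg h3
          dsimp only at h4
          rw [low s h3, high t h2, ht t h2]
          rw [ht T le_rfl] at h4
          have := min_le_left (t - T) (l (n + 1) : ℝ)
          linarith
        · rw [high t h2, high s h3, ht t h2, ht s h3]
          rcases min_cases (t - T) (l (n + 1) : ℝ) with h5 | h5 <;>
          rcases min_cases (s - T) (l (n + 1) : ℝ) with h6 | h6 <;> linarith
    · intro c hcn
      dsimp only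
      rcases Nat.lt_or_ge n c with h | h
      · obtain rfl : c = n + 1 := by omega
        have hs : mark (l + m) (n + 1) = T + (l (n + 1) + m (n + 1)) := by
          rw [mark_succ]; simp [hT]
        rw [hs, ht _ (by linarith), high _ (by linarith), mark_succ, min_eq_right (by linarith)]
      · rw [low _ (mark_mono _ h), hc c h, add_zero]
    · intro t htz
      obtain ⟨a, ha⟩ := hz t htz
      obtain ⟨b, hb⟩ := htz
      obtain ⟨d, hd⟩ := mark_int (l + m) n
      refine ⟨a + min (max (b - d) 0) (l (n + 1)), ?_⟩
      dsimp only
      rw [ha, hb, hT, hd]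
      push_cast
      rfl
    · intro t h
      have hs : mark (l + m) (n + 1) = T + (l (n + 1) + m (n + 1)) := by
        rw [mark_succ]; simp [hT]
      rw [hs] at h
      dsimp only
      rw [ht _ (by linarith), high _ (by linarith), mark_succ, min_eq_right (by linarith)]

/-! ### Potentials -/

/-- The point of the marked order polytope attached to `z`, extended to all of `ℕ × ℕ`. The values
outside the roots are chosen so that the recursion of `potential_eq` holds at every root: the
row `i = 0` is `0`, a lower bound of all values, and below the diagonal `(i,j)` carries the `j`-th
mark. -/
noncomputable def potential (m : ℕ → ℕ) (z : ℕ × ℕ → ℝ) : ℕ → ℕ → ℝ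
  | 0, _ => 0
  | _ + 1, 0 => 0
  | i + 1, j + 1 =>
    if j < i then mark m (j + 1)
    else z (i + 1, j + 1) + max (potential m z i (j + 1)) (potential m z (i + 1) j)

lemma potential_eq (m : ℕ → ℕ) (z : ℕ × ℕ → ℝ) {i j : ℕ} (hi : 1 ≤ i) (hij : i ≤ j) :
    potential m z i j =
      z (i, j) + max (potential m z (i - 1) j) (potential m z i (j - 1)) := by
  obtain ⟨i, rfl⟩ : ∃ k, i = k + 1 := ⟨i - 1, by omega⟩
  obtain ⟨j, rfl⟩ : ∃ k, j = k + 1 := ⟨j - 1, by omega⟩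
  rw [potential, if_neg (by omega)]
  simp

lemma potential_pred (m : ℕ → ℕ) (z : ℕ × ℕ → ℝ) {i : ℕ} (hi : 1 ≤ i) :
    potential m z i (i - 1) = mark m (i - 1) := by
  obtain ⟨i, rfl⟩ : ∃ k, i = k + 1 := ⟨i - 1, by omega⟩
  cases i with
  | zero => simp [potential, mark_zero]
  | succ i => simp [potential]

lemma potential_nonneg (m : ℕ → ℕ) {z : ℕ × ℕ → ℝ} (hz : ∀ r, 0 ≤ z r) (i j : ℕ) :
    0 ≤ potential m z i j := by
  fun_induction potential m z i j with
  | case1 => exact le_rfl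
  | case2 => exact le_rfl
  | case3 => exact mark_nonneg _ _
  | case4 i j h ih1 ih2 => exact add_nonneg (hz _) (le_max_of_le_left ih1)

lemma potential_int (m : ℕ → ℕ) {z : ℕ × ℕ → ℝ} (hz : ∀ r, ∃ k : ℤ, z r = k) (i j : ℕ) :
    ∃ k : ℤ, potential m z i j = k := by
  fun_induction potential m z i j with
  | case1 => exact ⟨0, by simp⟩
  | case2 => exact ⟨0, by simp⟩
  | case3 => exact mark_int _ _
  | case4 i j h ih1 ih2 =>
    obtain ⟨a, ha⟩ := ih1
    obtain ⟨b, hb⟩ := ih2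
    obtain ⟨c, hc⟩ := hz (i + 1, j + 1)
    exact ⟨c + max a b, by rw [ha, hb, hc]; push_cast; rfl⟩

/-- `p` is a strictly decreasing sequence of `len` roots from a simple root to `r`. -/
def IsChainTo (n len : ℕ) (p : ℕ → ℕ × ℕ) (r : ℕ × ℕ) : Prop :=
  1 ≤ len ∧ (∀ t, t < len → InRnegA n (p t)) ∧ (p 0).1 = (p 0).2 ∧ p (len - 1) = r ∧
  (∀ t, t + 1 < len → GeA (p t) (p (t + 1)) ∧ p t ≠ p (t + 1))

/-- Appending one root to a chain. -/
lemma IsChainTo.snoc {n len : ℕ} {p : ℕ → ℕ × ℕ} {r s : ℕ × ℕ} (h : IsChainTo n len p r)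
    (hs : InRnegA n s) (hrs : GeA r s) (hne : r ≠ s) :
    IsChainTo n (len + 1) (fun t => if t < len then p t else s) s := by
  obtain ⟨h1, h2, h3, h4, h5⟩ := h
  refine ⟨by omega, ?_, ?_, by simp, ?_⟩
  · intro t _
    dsimp only
    split_ifs with hlt
    exacts [h2 t hlt, hs]
  · simpa [show 0 < len by omega] using h3
  · intro t ht
    dsimp only
    rw [if_pos (show t < len by omega)]
    split_ifs with hlt
    · exact h5 t hlt
    · obtain rfl : t = len - 1 := by omega
      rw [h4]
      exact ⟨hrs, hne⟩

/-- The potential at a root is bounded by the weight of some chain leading to it: unwind the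
recursion, following at each root the predecessor that attains the maximum. -/
lemma exists_chain (n : ℕ) (m : ℕ → ℕ) {z : ℕ × ℕ → ℝ} (hz : ∀ r, 0 ≤ z r) (N : ℕ) :
    ∀ i j, i + j = N → 1 ≤ i → i ≤ j → j ≤ n →
      ∃ len p, IsChainTo n len p (i, j) ∧
        potential m z i j ≤ mark m ((p 0).1 - 1) + ∑ t ∈ Finset.range len, z (p t) := by
  induction N using Nat.strong_induction_on with
  | _ N ih =>
    intro i j hN hi hij hj
    have hr : InRnegA n (i, j) := ⟨hi, hij, hj⟩
    have extend : ∀ i' j', i' + j' < N → 1 ≤ i' → i' ≤ j' → i' ≤ i → j' ≤ j →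
        potential m z i j = z (i, j) + potential m z i' j' →
        ∃ len p, IsChainTo n len p (i, j) ∧
          potential m z i j ≤ mark m ((p 0).1 - 1) + ∑ t ∈ Finset.range len, z (p t) := by
      intro i' j' hlt h1 h2 h3 h4 heq
      obtain ⟨len, p, hp, hle⟩ := ih _ hlt i' j' rfl h1 h2 (h4.trans hj)
      have hlen := hp.1
      refine ⟨len + 1, _, hp.snoc hr ⟨h3, h4⟩ ?_, ?_⟩
      · intro h
        rw [Prod.mk.injEq] at h
        omega
      · rw [Finset.sum_range_succ]
        have hsum : ∑ t ∈ Finset.range len, z (if t < len then p t else (i, j)) =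
            ∑ t ∈ Finset.range len, z (p t) :=
          Finset.sum_congr rfl fun t ht => by rw [if_pos (Finset.mem_range.1 ht)]
        rw [hsum, heq]
        simp only [lt_irrefl, if_false, if_pos (show 0 < len by omega)]
        linarith
    have left : potential m z i j = z (i, j) + potential m z i (j - 1) →
        ∃ len p, IsChainTo n len p (i, j) ∧
          potential m z i j ≤ mark m ((p 0).1 - 1) + ∑ t ∈ Finset.range len, z (p t) := by
      intro heq
      rcases Nat.lt_or_ge i j with h | h
      · exact extend i (j - 1) (by omega) hi (by omega) le_rfl (by omega) heq
      · obtain rfl : i = j := by omega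
        refine ⟨1, fun _ => (i, i), ⟨le_rfl, fun _ _ => hr, rfl, rfl, fun t ht => by omega⟩, ?_⟩
        rw [heq, potential_pred m z hi]
        simp [add_comm]
    have hrec := potential_eq m z hi hij
    rcases Nat.lt_or_ge 1 i with h | h
    · rcases max_cases (potential m z (i - 1) j) (potential m z i (j - 1)) with hm | hm
      · rw [hm.1] at hrec
        exact extend (i - 1) j (by omega) (by omega) (by omega) (by omega) le_rfl hrec
      · rw [hm.1] at hrec
        exact left hrec
    · obtain rfl : i = 1 := by omega
      -- In the first row the other entry of the maximum is the artificial value `0`.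
      apply left
      rw [hrec, max_eq_right]
      simpa [potential] using potential_nonneg m hz 1 (j - 1)

/-- The Dyck path inequalities bound the potential on the diagonal by the marks. -/
lemma potential_diag_le {n : ℕ} {m : ℕ → ℕ} {z : ℕ × ℕ → ℝ} (hz : z ∈ PolyA n m) {i : ℕ}
    (hi : 1 ≤ i) (hin : i ≤ n) : potential m z i i ≤ mark m i := by
  obtain ⟨-, hpos, hdyck⟩ := hz
  obtain ⟨len, p, ⟨h1, h2, h3, h4, h5⟩, hle⟩ := exists_chain n m hpos _ i i rfl hi le_rfl hin
  have hb := hdyck len p ⟨h1, h2, h3, by rw [h4], h5⟩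
  have hge : ∀ t, t < len → (p 0).1 ≤ (p t).1 := by
    intro t
    induction t with
    | zero => intro _; exact le_rfl
    | succ t ih => intro ht; exact (ih (by omega)).trans (h5 t ht).1.1
  have hs := hge (len - 1) (by omega)
  rw [h4] at hs hb
  rw [sum_Icc_eq_mark m (h2 0 (by omega)).1 hs] at hb
  linarith

/-- A point all of whose coordinates are bounded by the increments of a function `V` that is
compatible with the marks satisfies the Dyck path inequalities: these telescope. -/
lemma mem_polyA_of_potential {n : ℕ} {m : ℕ → ℕ} {x : ℕ × ℕ → ℝ} (V : ℕ → ℕ → ℝ)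
    (hsupp : ∀ r, ¬ InRnegA n r → x r = 0) (hpos : ∀ r, 0 ≤ x r)
    (hup : ∀ i j, InRnegA n (i, j) → V (i - 1) j + x (i, j) ≤ V i j)
    (hleft : ∀ i j, InRnegA n (i, j) → V i (j - 1) + x (i, j) ≤ V i j)
    (hpred : ∀ i, 1 ≤ i → i ≤ n → V i (i - 1) = mark m (i - 1))
    (hdiag : ∀ i, 1 ≤ i → i ≤ n → V i i ≤ mark m i) : x ∈ PolyA n m := by
  refine ⟨hsupp, hpos, ?_⟩
  intro len p ⟨h1, h2, h3, h4, h5⟩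
  have monoR : ∀ a b d, 1 ≤ a → a ≤ b → b ≤ d → d ≤ n → V a b ≤ V a d := by
    intro a b d ha hab hbd
    induction d, hbd using Nat.le_induction with
    | base => intro _; exact le_rfl
    | succ d hd ih =>
      intro hdn
      have := hleft a (d + 1) ⟨ha, by dsimp only; omega, hdn⟩
      have := hpos (a, d + 1)
      have := ih (by omega)
      simp only [Nat.add_sub_cancel] at *
      linarith
  have monoU : ∀ a c d, 1 ≤ a → a ≤ c → c ≤ d → d ≤ n → V a d ≤ V c d := by
    intro a c d ha hac
    induction c, hac using Nat.le_induction with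
    | base => intro _ _; exact le_rfl
    | succ c hc ih =>
      intro hcd hdn
      have := hup (c + 1) d ⟨by dsimp only; omega, hcd, hdn⟩
      have := hpos (c + 1, d)
      have := ih (by omega) hdn
      simp only [Nat.add_sub_cancel] at *
      linarith
  have step : ∀ a b c d, InRnegA n (a, b) → InRnegA n (c, d) → GeA (a, b) (c, d) →
      (a, b) ≠ (c, d) → V a b + x (c, d) ≤ V c d := by
    intro a b c d hab hcd hge hne
    have := hup c d hcd
    have := hleft c d hcd
    simp only [InRnegA, GeA, ne_eq, Prod.mk.injEq] at hab hcd hge hne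
    rcases Nat.lt_or_ge a c with h | h
    · have := monoR a b d (by omega) (by omega) (by omega) (by omega)
      have := monoU a (c - 1) d (by omega) (by omega) (by omega) (by omega)
      linarith
    · obtain rfl : a = c := by omega
      have := monoR a b (d - 1) (by omega) (by omega) (by omega) (by omega)
      linarith
  have key : ∀ t, t < len →
      mark m ((p 0).1 - 1) + ∑ k ∈ Finset.range (t + 1), x (p k) ≤ V (p t).1 (p t).2 ∧
        (p 0).1 ≤ (p t).1 := by
    intro t
    induction t with
    | zero =>
      intro ht
      obtain ⟨ha, hb, hc⟩ := h2 0 ht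
      have := hleft _ _ (h2 0 ht)
      rw [← h3, hpred _ ha (hb.trans hc)] at this
      simp only [zero_add, Finset.sum_range_one, le_refl, and_true]
      rw [← h3]
      have h0 : ((p 0).1, (p 0).1) = p 0 := by ext <;> simp [h3]
      rwa [h0] at this
    | succ t ih =>
      intro ht
      obtain ⟨ih1, ih2⟩ := ih (by omega)
      obtain ⟨hge, hne⟩ := h5 t ht
      have := step (p t).1 (p t).2 (p (t + 1)).1 (p (t + 1)).2 (h2 t (by omega)) (h2 _ ht) hge hne
      rw [Finset.sum_range_succ]
      refine ⟨?_, ih2.trans hge.1⟩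
      simp only [Prod.mk.eta] at this
      linarith
  obtain ⟨hk1, hk2⟩ := key (len - 1) (by omega)
  obtain ⟨ha, hb, hc⟩ := h2 (len - 1) (by omega)
  have := hdiag _ ha (hb.trans hc)
  rw [← h4, Nat.sub_add_cancel h1] at hk1
  rw [sum_Icc_eq_mark m (h2 0 (by omega)).1 hk2]
  linarith

/-! ### Splitting a point -/

open Classical in
/-- The point of the marked chain polytope attached to the potential `f ∘ Y`, where `Y` is the
potential of `z`: each coordinate is the increment over the larger of the two predecessors. -/
noncomputable def pullback (n : ℕ) (m : ℕ → ℕ) (z : ℕ × ℕ → ℝ) (f : ℝ → ℝ) : ℕ × ℕ → ℝ :=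
  fun r => if InRnegA n r then
    f (potential m z r.1 r.2) -
      max (f (potential m z (r.1 - 1) r.2)) (f (potential m z r.1 (r.2 - 1)))
    else 0

lemma pullback_mem {n : ℕ} {m l : ℕ → ℕ} {z : ℕ × ℕ → ℝ} (hz : z ∈ PolyA n m) {f : ℝ → ℝ}
    (hf : Monotone f) (hmark : ∀ c ≤ n, f (mark m c) = mark l c) :
    pullback n m z f ∈ PolyA n l := by
  refine mem_polyA_of_potential (fun i j => f (potential m z i j)) ?_ ?_ ?_ ?_ ?_ ?_
  · intro r hr
    simp [pullback, hr]
  · intro r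
    unfold pullback
    split_ifs with hr
    · have h := potential_eq m z hr.1 hr.2.1
      rw [sub_nonneg, ← hf.map_max]
      apply hf
      linarith [hz.2.1 (r.1, r.2)]
    · exact le_rfl
  · intro i j hr
    simp only [pullback, if_pos hr]
    linarith [le_max_left (f (potential m z (i - 1) j)) (f (potential m z i (j - 1)))]
  · intro i j hr
    simp only [pullback, if_pos hr]
    linarith [le_max_right (f (potential m z (i - 1) j)) (f (potential m z i (j - 1)))]
  · intro i hi hin
    rw [potential_pred m z hi, hmark _ (by omega)]
  · intro i hi hin
    rw [← hmark i hin]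
    exact hf (potential_diag_le hz hi hin)

lemma pullback_int {n : ℕ} {m : ℕ → ℕ} {z : ℕ × ℕ → ℝ} {f : ℝ → ℝ}
    (hz : ∀ r, ∃ k : ℤ, z r = k) (hf : ∀ t : ℝ, (∃ k : ℤ, t = k) → ∃ k : ℤ, f t = k)
    (r : ℕ × ℕ) : ∃ k : ℤ, pullback n m z f r = k := by
  unfold pullback
  split_ifs
  · obtain ⟨a, ha⟩ := hf _ (potential_int m hz r.1 r.2)
    obtain ⟨b, hb⟩ := hf _ (potential_int m hz (r.1 - 1) r.2)
    obtain ⟨c, hc⟩ := hf _ (potential_int m hz r.1 (r.2 - 1))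
    exact ⟨a - max b c, by rw [ha, hb, hc]; push_cast; rfl⟩
  · exact ⟨0, by simp⟩

/-- The Minkowski decomposition on the full polytope, with integral summands for integral points. -/
lemma polyA_split {n : ℕ} {l m : ℕ → ℕ} {z : ℕ × ℕ → ℝ} (hz : z ∈ PolyA n (l + m)) :
    ∃ x ∈ PolyA n l, ∃ y ∈ PolyA n m, z = x + y ∧
      ((∀ r, ∃ k : ℤ, z r = k) → (∀ r, ∃ k : ℤ, x r = k) ∧ ∀ r, ∃ k : ℤ, y r = k) := by
  obtain ⟨f, hf, hg, hmark, hfi, -⟩ := exists_split l m n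
  refine ⟨pullback n (l + m) z f, pullback_mem hz hf hmark,
    pullback n (l + m) z (fun t => t - f t), pullback_mem hz hg ?_, ?_, ?_⟩
  · intro c hc
    rw [hmark c hc, mark_add]
    ring
  · funext r
    simp only [Pi.add_apply, pullback]
    split_ifs with hr
    · have h := potential_eq (l + m) z hr.1 hr.2.1
      -- Both `f` and its complement commute with the maximum, so the two maxima add up.
      have h1 := hf.map_max (a := potential (l + m) z (r.1 - 1) r.2)
        (b := potential (l + m) z r.1 (r.2 - 1))
      have h2 := hg.map_max (a := potential (l + m) z (r.1 - 1) r.2)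
        (b := potential (l + m) z r.1 (r.2 - 1))
      rw [← h1, ← h2]
      simp only [Prod.mk.eta] at h
      linarith
    · simpa using hz.1 r hr
  · intro hzint
    refine ⟨pullback_int hzint hfi, pullback_int hzint ?_⟩
    intro t ht
    obtain ⟨a, ha⟩ := hfi t ht
    obtain ⟨b, hb⟩ := ht
    exact ⟨b - a, by rw [ha, hb]; push_cast; rfl⟩

lemma polyFaceA_add {n : ℕ} {l m : ℕ → ℕ} {A : Set (ℕ × ℕ)} {x y : ℕ × ℕ → ℝ}
    (hx : x ∈ PolyFaceA n l A) (hy : y ∈ PolyFaceA n m A) :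
    x + y ∈ PolyFaceA n (l + m) A := by
  obtain ⟨⟨x1, x2, x3⟩, x4⟩ := hx
  obtain ⟨⟨y1, y2, y3⟩, y4⟩ := hy
  refine ⟨⟨fun r hr => by simp [x1 r hr, y1 r hr], fun r => add_nonneg (x2 r) (y2 r), ?_⟩,
    fun r hr => by simp [x4 r hr, y4 r hr]⟩
  intro len p hp
  simpa [Finset.sum_add_distrib] using add_le_add (x3 len p hp) (y3 len p hp)

/-- The decomposition of a point of a face stays in the face, because the summands are
nonnegative. -/
lemma polyFaceA_split {n : ℕ} {l m : ℕ → ℕ} {A : Set (ℕ × ℕ)} {z : ℕ × ℕ → ℝ}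
    (hz : z ∈ PolyFaceA n (l + m) A) :
    ∃ x ∈ PolyFaceA n l A, ∃ y ∈ PolyFaceA n m A, z = x + y ∧
      ((∀ r, ∃ k : ℤ, z r = k) → (∀ r, ∃ k : ℤ, x r = k) ∧ ∀ r, ∃ k : ℤ, y r = k) := by
  obtain ⟨x, hx, y, hy, rfl, hfi⟩ := polyA_split hz.1
  have h0 : ∀ r, r ∉ A → x r + y r = 0 := hz.2
  exact ⟨x, ⟨hx, fun r hr => by linarith [h0 r hr, hx.2.1 r, hy.2.1 r]⟩,
    y, ⟨hy, fun r hr => by linarith [h0 r hr, hx.2.1 r, hy.2.1 r]⟩, rfl, hfi⟩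

/-- For `A ⊆ R⁻(A_n)` FFLV-admissible and all `λ, μ ∈ ℤ_{≥0}^n`:
`P_A(λ) + P_A(μ) = P_A(λ+μ)` and `S_A(λ) + S_A(μ) = S_A(λ+μ)` (Minkowski sums). -/
theorem stmt15 (n : ℕ) (hn : 1 ≤ n) (A : Set (ℕ × ℕ)) (hA : AdmissibleA n A)
    (lam mu : ℕ → ℕ) :
    {z | ∃ x ∈ PolyFaceA n lam A, ∃ y ∈ PolyFaceA n mu A, z = x + y} =
        PolyFaceA n (lam + mu) A ∧
    {z | ∃ x ∈ LatticeFaceA n lam A, ∃ y ∈ LatticeFaceA n mu A, z = x + y} =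
        LatticeFaceA n (lam + mu) A := by
  constructor
  · ext z
    constructor
    · rintro ⟨x, hx, y, hy, rfl⟩
      exact polyFaceA_add hx hy
    · intro hz
      obtain ⟨x, hx, y, hy, h, -⟩ := polyFaceA_split hz
      exact ⟨x, hx, y, hy, h⟩
  · ext z
    constructor
    · rintro ⟨x, ⟨hx, hxi⟩, y, ⟨hy, hyi⟩, rfl⟩
      refine ⟨polyFaceA_add hx hy, fun r => ?_⟩
      obtain ⟨a, ha⟩ := hxi r
      obtain ⟨b, hb⟩ := hyi r
      exact ⟨a + b, by simp [ha, hb]⟩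
    · rintro ⟨hz, hzi⟩
      obtain ⟨x, hx, y, hy, h, hfi⟩ := polyFaceA_split hz
      exact ⟨x, ⟨hx, (hfi hzi).1⟩, y, ⟨hy, (hfi hzi).2⟩, h⟩
end
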